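/- Let α⃗ = (α₁,α₂) with α₁,α₂ > −1, let 1 < p ≤ q < ∞, and let μ be a positive measure on Π⁺×Π⁺. The following are equivalent: (a) there exists C > 0 such that μ(Q_{I₁}×Q_{I₂}) ≤ C (V_{α₁}(Q_{I₁}) V_{α₂}(Q_{I₂}))^{q/p} for all intervals I₁, I₂ ⊂ ℝ; (b) there exists C > 0 such that for every holomorphic f on Π⁺×Π⁺ one has ∫_{Π⁺×Π⁺} |f|^q dμ ≤ C (∫_{Π⁺×Π⁺} |f|^p dV_{α⃗})^{q/p}. -/

import Mathlib

open MeasureTheory Set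
open scoped ENNReal NNReal

noncomputable section

/-- The upper half-plane `Π⁺`. -/
def UHP : Set ℂ := {z : ℂ | 0 < z.im}

/-- The weighted measure `dV_α(x+iy) = y^α dx dy` on the upper half-plane. -/
def Vm (α : ℝ) : Measure ℂ :=
  (volume.restrict UHP).withDensity fun z => ENNReal.ofReal (z.im ^ α)

/-- The Carleson square `Q_I = {x+iy : x ∈ I, 0 < y < |I|}` of the interval `I = (a,b)`. -/
def carlSq (a b : ℝ) : Set ℂ :=
  {z : ℂ | z.re ∈ Set.Ioo a b ∧ z.im ∈ Set.Ioo 0 (b - a)}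

/-!
Jensen's formula makes `log |f|` submean over circles, hence, by convexity of `exp`, so is `|f|^p`
for every `p > 0`. Integrating over discs of radius half the height, on which the weight is
essentially constant, and iterating in the two variables, `|f(z)|^p` is at most a constant times the
mean of `|f|^p` over the Whitney bidisc of `z`. Raise this to the power `q / p`, integrate against
`μ` and exchange the integrals: a fixed `w` lies in the bidisc of `z` only for `z` in a product of
Carleson squares whose volume is comparable to that of the bidisc, so the Carleson condition bounds
the inner integral uniformly.

Conversely, test the embedding on products of the functions `((b - a) / (z - a + (b - a) i)) ^ N`.
They are bounded below on the Carleson square over `(a, b)`, and by translation and dilation the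
integral of their `p`-th power is a multiple of the volume of that square, finite once
`N p > α + 3`.
-/

lemma log_norm_le_circleAverage_log_norm {g : ℂ → ℂ} {c : ℂ} {r : ℝ}
    (hg : AnalyticOnNhd ℂ g (Metric.closedBall c |r|)) (hc : g c ≠ 0) :
    Real.log ‖g c‖ ≤ Real.circleAverage (fun z => Real.log ‖g z‖) c r := by
  rcases eq_or_ne r 0 with rfl | hr
  · simp
  rw [hg.circleAverage_log_norm hr hc, le_add_iff_nonneg_left]
  refine finsum_nonneg fun u => ?_
  by_cases hu : u ∈ Metric.closedBall c |r|
  · refine mul_nonneg (mod_cast MeromorphicOn.AnalyticOnNhd.divisor_nonneg hg u) ?_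
    rcases eq_or_ne u c with rfl | huc
    · simp
    · rw [← Real.log_abs, abs_mul, abs_inv, abs_norm, ← dist_eq_norm, dist_comm,
        ← div_eq_mul_inv]
      exact Real.log_nonneg <| (one_le_div (dist_pos.2 huc)).2 hu
  · simp [hu]

lemma exp_circleAverage_le_circleAverage_exp {u : ℂ → ℝ} {c : ℂ} {r : ℝ}
    (hu : CircleIntegrable u c r) (hexp : CircleIntegrable (fun z => Real.exp (u z)) c r) :
    Real.exp (Real.circleAverage u c r) ≤ Real.circleAverage (fun z => Real.exp (u z)) c r := by
  rw [Real.circleAverage_eq_intervalAverage, Real.circleAverage_eq_intervalAverage]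
  exact convexOn_exp.map_set_average_le Real.continuous_exp.continuousOn isClosed_univ
    (by simp [Real.pi_pos.le, Real.pi_pos]) (by simp [Real.volume_uIoc, ENNReal.mul_eq_top])
    (by simp) hu.def' hexp.def'

lemma norm_rpow_le_circleAverage {p : ℝ} (hp : 0 < p) {g : ℂ → ℂ} {c : ℂ} {r : ℝ}
    (hg : AnalyticOnNhd ℂ g (Metric.closedBall c |r|)) :
    ‖g c‖ ^ p ≤ Real.circleAverage (fun z => ‖g z‖ ^ p) c r := by
  rcases eq_or_ne (g c) 0 with hc | hc
  · rw [hc, norm_zero, Real.zero_rpow hp.ne']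
    exact Real.circleAverage_nonneg_of_nonneg fun z _ => by positivity
  rcases eq_or_ne r 0 with rfl | hr
  · simp
  have hg' : AnalyticOnNhd ℂ g (Metric.sphere c |r|) := hg.mono Metric.sphere_subset_closedBall
  have hpow : (fun z => ‖g z‖ ^ p) =ᶠ[Filter.codiscreteWithin (Metric.sphere c |r|)]
      fun z => Real.exp (p * Real.log ‖g z‖) := by
    have hne := (hg.eqOn_zero_or_eventually_ne_zero_of_preconnected
      (convex_closedBall c |r|).isPreconnected).resolve_left
        fun h => hc (h (Metric.mem_closedBall_self (abs_nonneg r)))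
    filter_upwards [Filter.codiscreteWithin_mono Metric.sphere_subset_closedBall hne] with z hz
    rw [Real.rpow_def_of_pos (norm_pos_iff.2 hz), mul_comm]
  have hpow_int : CircleIntegrable (fun z => ‖g z‖ ^ p) c r :=
    (hg'.continuousOn.norm.rpow_const fun _ _ => Or.inr hp.le).circleIntegrable'
  have hlog_int : CircleIntegrable (fun z => p * Real.log ‖g z‖) c r :=
    hg'.meromorphicOn.circleIntegrable_log_norm.const_mul p
  calc ‖g c‖ ^ p = Real.exp (p * Real.log ‖g c‖) := by
        rw [Real.rpow_def_of_pos (norm_pos_iff.2 hc), mul_comm]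
    _ ≤ Real.exp (p * Real.circleAverage (fun z => Real.log ‖g z‖) c r) := by
        gcongr
        exact log_norm_le_circleAverage_log_norm hg hc
    _ = Real.exp (Real.circleAverage (fun z => p * Real.log ‖g z‖) c r) := by
        rw [← smul_eq_mul, ← Real.circleAverage_fun_smul]
        rfl
    _ ≤ Real.circleAverage (fun z => Real.exp (p * Real.log ‖g z‖)) c r :=
        exp_circleAverage_le_circleAverage_exp hlog_int (hpow_int.congr_codiscreteWithin hpow)
    _ = _ := (Real.circleAverage_congr_codiscreteWithin hpow hr).symm

lemma circleAverage_eq_setIntegral_Ioo {E : Type*} [NormedAddCommGroup E] [NormedSpace ℝ E]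
    (f : ℂ → E) (c : ℂ) (r : ℝ) :
    Real.circleAverage f c r =
      (2 * Real.pi)⁻¹ • ∫ θ in Ioo (-Real.pi) Real.pi, f (circleMap c r θ) := by
  rw [Real.circleAverage_eq_integral_add (-Real.pi),
    intervalIntegral.integral_comp_add_right fun θ => f (circleMap c r θ), zero_add,
    two_mul, add_neg_cancel_right, intervalIntegral.integral_of_le (by linarith [Real.pi_pos]),
    integral_Ioc_eq_integral_Ioo]

lemma enorm_rpow_le_lintegral_circleMap {p : ℝ} (hp : 0 < p) {g : ℂ → ℂ} {c : ℂ} {r : ℝ}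
    (hg : AnalyticOnNhd ℂ g (Metric.closedBall c |r|)) :
    ENNReal.ofReal (2 * Real.pi) * ‖g c‖ₑ ^ p ≤
      ∫⁻ θ in Ioo (-Real.pi) Real.pi, ‖g (circleMap c r θ)‖ₑ ^ p := by
  have hcont : Continuous fun θ => ‖g (circleMap c r θ)‖ ^ p :=
    ((hg.mono Metric.sphere_subset_closedBall).continuousOn.norm.rpow_const
      fun _ _ => Or.inr hp.le).comp_continuous (continuous_circleMap c r)
        (circleMap_mem_sphere' c r)
  have hint : IntegrableOn (fun θ => ‖g (circleMap c r θ)‖ ^ p) (Ioo (-Real.pi) Real.pi) :=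
    hcont.integrableOn_Icc.mono_set Ioo_subset_Icc_self
  have hmean : 2 * Real.pi * ‖g c‖ ^ p ≤
      ∫ θ in Ioo (-Real.pi) Real.pi, ‖g (circleMap c r θ)‖ ^ p := by
    have h := norm_rpow_le_circleAverage hp hg
    rwa [circleAverage_eq_setIntegral_Ioo, smul_eq_mul, inv_mul_eq_div,
      le_div_iff₀' Real.two_pi_pos] at h
  have hofReal : ∀ z, ENNReal.ofReal (‖g z‖ ^ p) = ‖g z‖ₑ ^ p := fun z => by
    rw [← ENNReal.ofReal_rpow_of_nonneg (norm_nonneg _) hp.le, ofReal_norm]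
  calc ENNReal.ofReal (2 * Real.pi) * ‖g c‖ₑ ^ p
      = ENNReal.ofReal (2 * Real.pi * ‖g c‖ ^ p) := by
        rw [ENNReal.ofReal_mul Real.two_pi_pos.le, hofReal]
    _ ≤ ENNReal.ofReal (∫ θ in Ioo (-Real.pi) Real.pi, ‖g (circleMap c r θ)‖ ^ p) :=
        ENNReal.ofReal_le_ofReal hmean
    _ = _ := by
        rw [ofReal_integral_eq_lintegral_ofReal hint (.of_forall fun θ => by positivity)]
        simp only [hofReal]

lemma lintegral_eq_lintegral_circleMap {F : ℂ → ℝ≥0∞} (hF : Measurable F) (c : ℂ) :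
    ∫⁻ w, F w = ∫⁻ r in Ioi (0 : ℝ), ∫⁻ θ in Ioo (-Real.pi) Real.pi,
      ENNReal.ofReal r * F (circleMap c r θ) := by
  have hpolar : ∀ x : ℝ × ℝ, c + Complex.polarCoord.symm x = circleMap c x.1 x.2 := fun x => by
    rw [Complex.polarCoord_symm_apply, circleMap, Complex.exp_mul_I, Complex.ofReal_cos,
      Complex.ofReal_sin]
  have hmeas : Measurable fun x : ℝ × ℝ => ENNReal.ofReal x.1 * F (circleMap c x.1 x.2) := by
    simp only [circleMap]
    fun_prop
  rw [← lintegral_add_left_eq_self F c, ← Complex.lintegral_comp_polarCoord_symm,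
    polarCoord_target, Measure.volume_eq_prod, ← Measure.prod_restrict]
  simp only [smul_eq_mul, hpolar]
  rw [lintegral_prod _ hmeas.aemeasurable]

lemma measurable_indicator_of_continuousOn {X : Type*} [TopologicalSpace X] [MeasurableSpace X]
    [OpensMeasurableSpace X] {F : X → ℝ≥0∞} {s : Set X} (hF : ContinuousOn F s)
    (hs : MeasurableSet s) : Measurable (s.indicator F) := by
  classical
  rw [← piecewise_eq_indicator]
  exact hF.measurable_piecewise continuousOn_const hs

lemma enorm_rpow_mul_volume_ball_le {p : ℝ} (hp : 0 < p) {g : ℂ → ℂ} {c : ℂ} {R : ℝ}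
    (hg : DifferentiableOn ℂ g (Metric.ball c R)) :
    ‖g c‖ₑ ^ p * volume (Metric.ball c R) ≤ ∫⁻ w in Metric.ball c R, ‖g w‖ₑ ^ p := by
  have hball : MeasurableSet (Metric.ball c R) := Metric.isOpen_ball.measurableSet
  have hG : Measurable ((Metric.ball c R).indicator fun w => ‖g w‖ₑ ^ p) :=
    measurable_indicator_of_continuousOn
      (ENNReal.continuous_rpow_const.comp_continuousOn hg.continuousOn.enorm) hball
  rw [← setLIntegral_const, ← lintegral_indicator hball, ← lintegral_indicator hball,
    lintegral_eq_lintegral_circleMap (measurable_const.indicator hball) c,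
    lintegral_eq_lintegral_circleMap hG c]
  refine setLIntegral_mono' measurableSet_Ioi fun r (hr : 0 < r) => ?_
  rw [lintegral_const_mul' _ _ ENNReal.ofReal_ne_top,
    lintegral_const_mul' _ _ ENNReal.ofReal_ne_top]
  gcongr _ * ?_
  have hmem : ∀ θ, circleMap c r θ ∈ Metric.ball c R ↔ r < R := fun θ => by
    rw [Metric.mem_ball, dist_eq_norm, circleMap_sub_center, norm_circleMap_zero, abs_of_pos hr]
  by_cases hrR : r < R
  · simp only [indicator_of_mem ((hmem _).2 hrR)]
    have hsub : Metric.closedBall c |r| ⊆ Metric.ball c R :=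
      Metric.closedBall_subset_ball (by rwa [abs_of_pos hr])
    rw [setLIntegral_const, Real.volume_Ioo, sub_neg_eq_add, ← two_mul, mul_comm]
    exact enorm_rpow_le_lintegral_circleMap hp ((hg.analyticOnNhd Metric.isOpen_ball).mono hsub)
  · simp [indicator_of_notMem (mt (hmem _).1 hrR)]

lemma isOpen_UHP : IsOpen UHP := isOpen_lt continuous_const Complex.continuous_im

lemma measurable_ofReal_im_rpow (α : ℝ) : Measurable fun z : ℂ => ENNReal.ofReal (z.im ^ α) :=
  (Complex.measurable_im.pow_const α).ennreal_ofReal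

instance sFinite_Vm (α : ℝ) : SFinite (Vm α) := by
  unfold Vm
  infer_instance

lemma setLIntegral_Vm (α : ℝ) (g : ℂ → ℝ≥0∞) {s : Set ℂ} (hs : MeasurableSet s) (hsU : s ⊆ UHP) :
    ∫⁻ w in s, g w ∂Vm α = ∫⁻ w in s, ENNReal.ofReal (w.im ^ α) * g w := by
  rw [Vm, restrict_withDensity hs, Measure.restrict_restrict hs, inter_eq_left.2 hsU,
    lintegral_withDensity_eq_lintegral_mul_non_measurable _ (measurable_ofReal_im_rpow α)
      (.of_forall fun _ => ENNReal.ofReal_lt_top)]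
  rfl

lemma restrict_Vm_UHP (α : ℝ) : (Vm α).restrict UHP = Vm α := by
  rw [Vm, restrict_withDensity isOpen_UHP.measurableSet,
    Measure.restrict_restrict isOpen_UHP.measurableSet, inter_self]

lemma lintegral_Vm (α : ℝ) (g : ℂ → ℝ≥0∞) :
    ∫⁻ w, g w ∂Vm α = ∫⁻ w in UHP, ENNReal.ofReal (w.im ^ α) * g w := by
  rw [← setLIntegral_Vm α g isOpen_UHP.measurableSet subset_rfl, restrict_Vm_UHP]

lemma restrict_volume_UHP_absolutelyContinuous_Vm (α : ℝ) :
    volume.restrict UHP ≪ Vm α := by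
  refine withDensity_absolutelyContinuous' (measurable_ofReal_im_rpow α).aemeasurable ?_
  filter_upwards [ae_restrict_mem isOpen_UHP.measurableSet] with z (hz : 0 < z.im)
  exact (ENNReal.ofReal_pos.2 (Real.rpow_pos_of_pos hz α)).ne'

lemma Vm_ne_zero_of_isOpen (α : ℝ) {s : Set ℂ} (hs : IsOpen s) (hne : s.Nonempty)
    (hsU : s ⊆ UHP) : Vm α s ≠ 0 := fun h => by
  have h' := restrict_volume_UHP_absolutelyContinuous_Vm α h
  rw [Measure.restrict_apply hs.measurableSet, inter_eq_left.2 hsU] at h'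
  exact (hs.measure_pos volume hne).ne' h'

lemma lintegral_eq_lintegral_mul_add {F : ℂ → ℝ≥0∞} (hF : Measurable F) {L : ℝ} (hL : 0 < L)
    (a : ℂ) : ∫⁻ w, F w = ENNReal.ofReal (L ^ 2) * ∫⁻ w, F (L * w + a) := by
  have hscale : ∫⁻ w, F (L * w + a) =
      ENNReal.ofReal |(L ^ Module.finrank ℝ ℂ)⁻¹| * ∫⁻ w, F (w + a) := by
    rw [← smul_eq_mul, ← lintegral_smul_measure, ← Measure.map_addHaar_smul volume hL.ne',
      lintegral_map (by fun_prop) (measurable_const_smul L)]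
    simp only [Complex.real_smul]
  rw [hscale, lintegral_add_right_eq_self F a, Complex.finrank_real_complex, ← mul_assoc,
    ← ENNReal.ofReal_mul (by positivity), abs_of_pos (by positivity),
    mul_inv_cancel₀ (by positivity), ENNReal.ofReal_one, one_mul]

lemma lintegral_Vm_eq_lintegral_mul_add (α : ℝ) {g : ℂ → ℝ≥0∞} (hg : Measurable g) {L : ℝ}
    (hL : 0 < L) (a : ℝ) :
    ∫⁻ w, g w ∂Vm α = ENNReal.ofReal (L ^ (2 + α)) * ∫⁻ w, g (L * w + a) ∂Vm α := by
  have hU := isOpen_UHP.measurableSet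
  have hmeas : Measurable fun w : ℂ => ENNReal.ofReal (w.im ^ α) * g w :=
    (measurable_ofReal_im_rpow α).mul hg
  have hind : ∀ w : ℂ, UHP.indicator (fun w => ENNReal.ofReal (w.im ^ α) * g w) (L * w + a) =
      ENNReal.ofReal (L ^ α) *
        UHP.indicator (fun w => ENNReal.ofReal (w.im ^ α) * g (L * w + a)) w := fun w => by
    have him : (L * w + a : ℂ).im = L * w.im := by simp
    by_cases hw : 0 < w.im
    · have hw' : 0 < (L * w + a : ℂ).im := him ▸ mul_pos hL hw
      rw [indicator_of_mem (show _ ∈ UHP from hw'), indicator_of_mem (show _ ∈ UHP from hw), him,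
        Real.mul_rpow hL.le hw.le, ENNReal.ofReal_mul (by positivity), mul_assoc]
    · have hw' : ¬ 0 < (L * w + a : ℂ).im := by rwa [him, mul_pos_iff_of_pos_left hL]
      rw [indicator_of_notMem (show _ ∉ UHP from hw'), indicator_of_notMem (show _ ∉ UHP from hw),
        mul_zero]
  rw [lintegral_Vm, lintegral_Vm, ← lintegral_indicator hU, ← lintegral_indicator hU,
    lintegral_eq_lintegral_mul_add (hmeas.indicator hU) hL a]
  simp only [hind]
  rw [lintegral_const_mul' _ _ ENNReal.ofReal_ne_top, ← mul_assoc,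
    ← ENNReal.ofReal_mul (by positivity), Real.rpow_add hL, Real.rpow_two]

lemma Vm_eq_Vm_preimage_mul_add (α : ℝ) {s : Set ℂ} (hs : MeasurableSet s) {L : ℝ} (hL : 0 < L)
    (a : ℝ) :
    Vm α s = ENNReal.ofReal (L ^ (2 + α)) * Vm α ((fun w : ℂ => L * w + a) ⁻¹' s) := by
  rw [← lintegral_indicator_one hs, ← lintegral_indicator_one (hs.preimage (by fun_prop)),
    lintegral_Vm_eq_lintegral_mul_add α (measurable_one.indicator hs) hL a]
  rfl

lemma isOpen_carlSq (a b : ℝ) : IsOpen (carlSq a b) :=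
  (isOpen_Ioo.preimage Complex.continuous_re).inter (isOpen_Ioo.preimage Complex.continuous_im)

lemma carlSq_subset_UHP (a b : ℝ) : carlSq a b ⊆ UHP := fun _ hz => hz.2.1

lemma nonempty_carlSq {a b : ℝ} (h : a < b) : (carlSq a b).Nonempty :=
  ⟨⟨(a + b) / 2, (b - a) / 2⟩, ⟨by dsimp only; linarith, by dsimp only; linarith⟩,
    by dsimp only; linarith, by dsimp only; linarith⟩

lemma Vm_carlSq_ne_zero (α : ℝ) {a b : ℝ} (h : a < b) : Vm α (carlSq a b) ≠ 0 :=
  Vm_ne_zero_of_isOpen α (isOpen_carlSq a b) (nonempty_carlSq h) (carlSq_subset_UHP a b)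

lemma Vm_carlSq_mul_add (α : ℝ) {L : ℝ} (hL : 0 < L) (a c d : ℝ) :
    Vm α (carlSq (L * c + a) (L * d + a)) =
      ENNReal.ofReal (L ^ (2 + α)) * Vm α (carlSq c d) := by
  rw [Vm_eq_Vm_preimage_mul_add α (isOpen_carlSq _ _).measurableSet hL a]
  congr 2
  ext w
  have hre : (L * w + a : ℂ).re = L * w.re + a := by simp
  have him : (L * w + a : ℂ).im = L * w.im := by simp
  simp only [carlSq, preimage_ofPred_eq, mem_ofPred_eq, mem_Ioo, hre, him, add_lt_add_iff_right,
    add_sub_add_right_eq_sub, ← mul_sub, mul_lt_mul_iff_right₀ hL, mul_pos_iff_of_pos_left hL]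

/-- The disc about `z` whose radius is half the distance to the boundary of the upper half-plane;
on it the weight `y ^ α` is comparable to its value at `z`. -/
def whitneyDisc (z : ℂ) : Set ℂ := Metric.ball z (z.im / 2)

lemma measurableSet_whitneyDisc (z : ℂ) : MeasurableSet (whitneyDisc z) :=
  Metric.isOpen_ball.measurableSet

lemma abs_re_sub_lt_and_abs_im_sub_lt {z w : ℂ} (hw : w ∈ whitneyDisc z) :
    |w.re - z.re| < z.im / 2 ∧ |w.im - z.im| < z.im / 2 := by
  rw [whitneyDisc, Metric.mem_ball, dist_eq_norm] at hw
  exact ⟨(Complex.abs_re_le_norm (w - z)).trans_lt hw, (Complex.abs_im_le_norm (w - z)).trans_lt hw⟩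

lemma whitneyDisc_subset_UHP (z : ℂ) : whitneyDisc z ⊆ UHP := fun w hw => by
  have him := abs_lt.1 (abs_re_sub_lt_and_abs_im_sub_lt hw).2
  change 0 < w.im
  linarith

lemma mem_whitneyDisc_self {z : ℂ} (hz : z ∈ UHP) : z ∈ whitneyDisc z :=
  Metric.mem_ball_self (half_pos hz)

lemma Vm_whitneyDisc_ne_zero (α : ℝ) {z : ℂ} (hz : z ∈ UHP) : Vm α (whitneyDisc z) ≠ 0 :=
  Vm_ne_zero_of_isOpen α Metric.isOpen_ball ⟨z, mem_whitneyDisc_self hz⟩ (whitneyDisc_subset_UHP z)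

lemma Vm_whitneyDisc (α : ℝ) {z : ℂ} (hz : z ∈ UHP) :
    Vm α (whitneyDisc z) = ENNReal.ofReal (z.im ^ (2 + α)) * Vm α (whitneyDisc Complex.I) := by
  replace hz : 0 < z.im := hz
  rw [Vm_eq_Vm_preimage_mul_add α (measurableSet_whitneyDisc z) hz z.re]
  congr 2
  ext w
  have hdist : (z.im * w + z.re : ℂ) - z = z.im * (w - Complex.I) := by
    apply Complex.ext
    · simp
    · simp [mul_sub]
  rw [mem_preimage, whitneyDisc, whitneyDisc, Metric.mem_ball, Metric.mem_ball, dist_eq_norm,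
    dist_eq_norm, hdist, norm_mul, Complex.norm_real, Real.norm_of_nonneg hz.le, Complex.I_im,
    div_eq_mul_one_div, mul_lt_mul_iff_right₀ hz]

/-- The product of the Whitney discs about the two coordinates of `z`. -/
def whitneyBidisc (z : ℂ × ℂ) : Set (ℂ × ℂ) := whitneyDisc z.1 ×ˢ whitneyDisc z.2

lemma measurableSet_whitneyBidisc (z : ℂ × ℂ) : MeasurableSet (whitneyBidisc z) :=
  (measurableSet_whitneyDisc z.1).prod (measurableSet_whitneyDisc z.2)

lemma whitneyBidisc_subset (z : ℂ × ℂ) : whitneyBidisc z ⊆ UHP ×ˢ UHP :=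
  prod_mono (whitneyDisc_subset_UHP z.1) (whitneyDisc_subset_UHP z.2)

lemma rpow_le_two_rpow_abs_mul {x y : ℝ} (hx : 0 < x) (hy : 0 < y) (hxy : x ≤ 2 * y)
    (hyx : y ≤ 2 * x) (α : ℝ) : x ^ α ≤ 2 ^ |α| * y ^ α := by
  rw [← div_le_iff₀ (by positivity), ← Real.div_rpow hx.le hy.le]
  rcases le_total 0 α with hα | hα
  · rw [abs_of_nonneg hα]
    exact Real.rpow_le_rpow (by positivity) ((div_le_iff₀ hy).2 hxy) hα
  · rw [abs_of_nonpos hα, ← inv_div, Real.inv_rpow (by positivity), ← Real.rpow_neg (by positivity)]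
    exact Real.rpow_le_rpow (by positivity) ((div_le_iff₀ hx).2 hyx) (neg_nonneg.2 hα)

lemma ofReal_im_rpow_comparable_of_mem_whitneyDisc (α : ℝ) {z w : ℂ} (hw : w ∈ whitneyDisc z) :
    ENNReal.ofReal (w.im ^ α) ≤ ENNReal.ofReal (2 ^ |α|) * ENNReal.ofReal (z.im ^ α) ∧
      ENNReal.ofReal (z.im ^ α) ≤ ENNReal.ofReal (2 ^ |α|) * ENNReal.ofReal (w.im ^ α) := by
  have him := abs_lt.1 (abs_re_sub_lt_and_abs_im_sub_lt hw).2
  rw [← ENNReal.ofReal_mul (by positivity), ← ENNReal.ofReal_mul (by positivity)]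
  constructor <;> refine ENNReal.ofReal_le_ofReal (rpow_le_two_rpow_abs_mul ?_ ?_ ?_ ?_ α) <;>
    linarith

lemma enorm_rpow_mul_Vm_whitneyDisc_le (α : ℝ) {p : ℝ} (hp : 0 < p) {g : ℂ → ℂ}
    (hg : DifferentiableOn ℂ g UHP) (z : ℂ) :
    ‖g z‖ₑ ^ p * Vm α (whitneyDisc z) ≤
      ENNReal.ofReal (2 ^ |α|) ^ 2 * ∫⁻ w in whitneyDisc z, ‖g w‖ₑ ^ p ∂Vm α := by
  have hD := measurableSet_whitneyDisc z
  have hDU := whitneyDisc_subset_UHP z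
  calc ‖g z‖ₑ ^ p * Vm α (whitneyDisc z)
      = ‖g z‖ₑ ^ p * ∫⁻ w in whitneyDisc z, ENNReal.ofReal (w.im ^ α) := by
        rw [← setLIntegral_one, setLIntegral_Vm α _ hD hDU]
        simp only [mul_one]
    _ ≤ ‖g z‖ₑ ^ p *
          ∫⁻ _ in whitneyDisc z, ENNReal.ofReal (2 ^ |α|) * ENNReal.ofReal (z.im ^ α) := by
        gcongr 1
        exact setLIntegral_mono' hD fun w hw =>
          (ofReal_im_rpow_comparable_of_mem_whitneyDisc α hw).1
    _ = ENNReal.ofReal (2 ^ |α|) * ENNReal.ofReal (z.im ^ α) *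
          (‖g z‖ₑ ^ p * volume (whitneyDisc z)) := by
        rw [setLIntegral_const]
        ring
    _ ≤ ENNReal.ofReal (2 ^ |α|) * ENNReal.ofReal (z.im ^ α) *
          ∫⁻ w in whitneyDisc z, ‖g w‖ₑ ^ p := by
        gcongr
        exact enorm_rpow_mul_volume_ball_le hp (hg.mono hDU)
    _ = ENNReal.ofReal (2 ^ |α|) *
          ∫⁻ w in whitneyDisc z, ENNReal.ofReal (z.im ^ α) * ‖g w‖ₑ ^ p := by
        rw [mul_assoc, lintegral_const_mul' _ _ ENNReal.ofReal_ne_top]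
    _ ≤ ENNReal.ofReal (2 ^ |α|) * ∫⁻ w in whitneyDisc z,
          ENNReal.ofReal (2 ^ |α|) * (ENNReal.ofReal (w.im ^ α) * ‖g w‖ₑ ^ p) := by
        gcongr 1
        refine setLIntegral_mono' hD fun w hw => ?_
        rw [← mul_assoc]
        gcongr
        exact (ofReal_im_rpow_comparable_of_mem_whitneyDisc α hw).2
    _ = ENNReal.ofReal (2 ^ |α|) ^ 2 * ∫⁻ w in whitneyDisc z, ‖g w‖ₑ ^ p ∂Vm α := by
        rw [lintegral_const_mul' _ _ ENNReal.ofReal_ne_top, setLIntegral_Vm α _ hD hDU, sq,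
          mul_assoc]

lemma enorm_rpow_mul_prod_whitneyBidisc_le (α₁ α₂ : ℝ) {p : ℝ} (hp : 0 < p) {f : ℂ × ℂ → ℂ}
    (hf : DifferentiableOn ℂ f (UHP ×ˢ UHP)) {z : ℂ × ℂ} (hz : z ∈ UHP ×ˢ UHP) :
    ‖f z‖ₑ ^ p * (Vm α₁).prod (Vm α₂) (whitneyBidisc z) ≤
      ENNReal.ofReal (2 ^ |α₁|) ^ 2 * ENNReal.ofReal (2 ^ |α₂|) ^ 2 *
        ∫⁻ w in whitneyBidisc z, ‖f w‖ₑ ^ p ∂(Vm α₁).prod (Vm α₂) := by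
  have hsub := whitneyBidisc_subset z
  have hmeas : AEMeasurable (fun w => ‖f w‖ₑ ^ p)
      (((Vm α₁).restrict (whitneyDisc z.1)).prod ((Vm α₂).restrict (whitneyDisc z.2))) := by
    rw [Measure.prod_restrict]
    exact ((hf.continuousOn.mono hsub).aemeasurable
      (measurableSet_whitneyBidisc z)).enorm.pow_const p
  have hfst : DifferentiableOn ℂ (fun w => f (w, z.2)) UHP :=
    hf.comp (f := fun w => (w, z.2)) (by fun_prop) fun w hw => ⟨hw, hz.2⟩
  have hsnd : ∀ w₁ ∈ UHP, DifferentiableOn ℂ (fun w => f (w₁, w)) UHP := fun w₁ hw₁ =>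
    hf.comp (f := fun w => (w₁, w)) (by fun_prop) fun w hw => ⟨hw₁, hw⟩
  rw [whitneyBidisc, Measure.prod_prod, ← Measure.prod_restrict, lintegral_prod _ hmeas]
  calc ‖f z‖ₑ ^ p * (Vm α₁ (whitneyDisc z.1) * Vm α₂ (whitneyDisc z.2))
      = ‖f (z.1, z.2)‖ₑ ^ p * Vm α₁ (whitneyDisc z.1) * Vm α₂ (whitneyDisc z.2) := by
        rw [mul_assoc]
    _ ≤ ENNReal.ofReal (2 ^ |α₁|) ^ 2 * (∫⁻ w₁ in whitneyDisc z.1, ‖f (w₁, z.2)‖ₑ ^ p ∂Vm α₁) *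
          Vm α₂ (whitneyDisc z.2) := by
        gcongr ?_ * _
        exact enorm_rpow_mul_Vm_whitneyDisc_le α₁ hp hfst z.1
    _ ≤ ENNReal.ofReal (2 ^ |α₁|) ^ 2 *
          ∫⁻ w₁ in whitneyDisc z.1, ‖f (w₁, z.2)‖ₑ ^ p * Vm α₂ (whitneyDisc z.2) ∂Vm α₁ := by
        rw [mul_assoc]
        gcongr
        exact lintegral_mul_const_le _ _
    _ ≤ ENNReal.ofReal (2 ^ |α₁|) ^ 2 * ∫⁻ w₁ in whitneyDisc z.1, ENNReal.ofReal (2 ^ |α₂|) ^ 2 *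
          ∫⁻ w₂ in whitneyDisc z.2, ‖f (w₁, w₂)‖ₑ ^ p ∂Vm α₂ ∂Vm α₁ := by
        gcongr 1
        refine setLIntegral_mono' (measurableSet_whitneyDisc z.1) fun w₁ hw₁ => ?_
        exact enorm_rpow_mul_Vm_whitneyDisc_le α₂ hp (hsnd w₁ (whitneyDisc_subset_UHP _ hw₁)) z.2
    _ = _ := by
        rw [lintegral_const_mul' _ _ (by finiteness), mul_assoc]

lemma lintegral_Vm_re_mul_im (α : ℝ) {A B : ℝ → ℝ≥0∞} (hA : Measurable A) (hB : Measurable B) :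
    ∫⁻ z, A z.re * B z.im ∂Vm α =
      (∫⁻ x, A x) * ∫⁻ y in Ioi 0, ENNReal.ofReal (y ^ α) * B y := by
  have hBm : Measurable ((Ioi 0).indicator fun y => ENNReal.ofReal (y ^ α) * B y) :=
    ((measurable_id.pow_const α).ennreal_ofReal.mul hB).indicator measurableSet_Ioi
  rw [lintegral_Vm, ← lintegral_indicator isOpen_UHP.measurableSet,
    ← lintegral_indicator measurableSet_Ioi, ← lintegral_prod_mul hA.aemeasurable hBm.aemeasurable,
    ← Measure.volume_eq_prod,
    ← Complex.volume_preserving_equiv_real_prod.lintegral_comp (by fun_prop)]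
  refine lintegral_congr fun z => ?_
  by_cases hz : 0 < z.im
  · rw [indicator_of_mem (show z ∈ UHP from hz), Complex.measurableEquivRealProd_apply,
      indicator_of_mem (show z.im ∈ Ioi 0 from hz), mul_left_comm]
  · rw [indicator_of_notMem (show z ∉ UHP from hz), Complex.measurableEquivRealProd_apply,
      indicator_of_notMem (show z.im ∉ Ioi 0 from hz), mul_zero]

lemma lintegral_Ioc_zero_rpow_lt_top {α : ℝ} (hα : -1 < α) {c : ℝ} (hc : 0 ≤ c) :
    ∫⁻ y in Ioc 0 c, ENNReal.ofReal (y ^ α) < ∞ :=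
  ((intervalIntegrable_iff_integrableOn_Ioc_of_le hc).1
    (intervalIntegral.intervalIntegrable_rpow' hα)).lintegral_lt_top

lemma lintegral_rpow_mul_one_add_rpow_neg_lt_top {α s : ℝ} (hα : -1 < α) (hs : α + 1 < s) :
    ∫⁻ y in Ioi 0, ENNReal.ofReal (y ^ α * (1 + y) ^ (-s)) < ∞ := by
  rw [← Ioc_union_Ioi_eq_Ioi zero_le_one]
  refine (lintegral_union_le _ _ _).trans_lt (ENNReal.add_lt_top.2 ⟨?_, ?_⟩)
  · refine (setLIntegral_mono' measurableSet_Ioc fun y hy => ENNReal.ofReal_le_ofReal ?_).trans_lt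
      (lintegral_Ioc_zero_rpow_lt_top hα zero_le_one)
    exact mul_le_of_le_one_right (Real.rpow_nonneg hy.1.le α)
      (Real.rpow_le_one_of_one_le_of_nonpos (by linarith [hy.1]) (by linarith))
  · refine (setLIntegral_mono' measurableSet_Ioi fun y hy => ENNReal.ofReal_le_ofReal ?_).trans_lt
      (integrableOn_Ioi_rpow_of_lt (by linarith : α - s < -1) one_pos).lintegral_lt_top
    have hy0 : 0 < y := one_pos.trans hy
    rw [sub_eq_add_neg, Real.rpow_add hy0]
    exact mul_le_mul_of_nonneg_left
      (Real.rpow_le_rpow_of_nonpos hy0 (by linarith) (by linarith)) (by positivity)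

lemma Vm_carlSq_lt_top {α : ℝ} (hα : -1 < α) {a b : ℝ} (h : a < b) : Vm α (carlSq a b) < ∞ := by
  have hind : (carlSq a b).indicator (1 : ℂ → ℝ≥0∞) =
      fun z => (Ioo a b).indicator 1 z.re * (Ioo 0 (b - a)).indicator 1 z.im := by
    ext z
    by_cases hre : z.re ∈ Ioo a b <;> by_cases him : z.im ∈ Ioo 0 (b - a) <;>
      simp [carlSq, -mem_Ioo, hre, him]
  rw [← lintegral_indicator_one (isOpen_carlSq a b).measurableSet, hind,
    lintegral_Vm_re_mul_im α (measurable_one.indicator measurableSet_Ioo)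
      (measurable_one.indicator measurableSet_Ioo), lintegral_indicator_one measurableSet_Ioo]
  refine ENNReal.mul_lt_top measure_Ioo_lt_top
    (lt_of_le_of_lt ?_ (lintegral_Ioc_zero_rpow_lt_top hα (sub_nonneg.2 h.le)))
  rw [← lintegral_indicator measurableSet_Ioi, ← lintegral_indicator measurableSet_Ioc]
  refine lintegral_mono fun y => ?_
  simp only [indicator_apply, mem_Ioo, mem_Ioi, mem_Ioc]
  split_ifs <;> simp_all [le_of_lt]

lemma norm_add_I_rpow_neg_le {t : ℝ} (ht : 2 ≤ t) {z : ℂ} (hz : z ∈ UHP) :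
    ‖z + Complex.I‖ ^ (-t) ≤ (1 + z.re ^ 2)⁻¹ * (1 + z.im) ^ (-(t - 2)) := by
  replace hz : 0 < z.im := hz
  have hsq : ‖z + Complex.I‖ ^ 2 = z.re ^ 2 + (1 + z.im) ^ 2 := by
    rw [← Complex.normSq_eq_norm_sq, Complex.normSq_apply]
    simp
    ring
  have hre : 1 + z.re ^ 2 ≤ ‖z + Complex.I‖ ^ 2 := by
    rw [hsq]
    nlinarith
  have him : 1 + z.im ≤ ‖z + Complex.I‖ :=
    le_of_sq_le_sq (by rw [hsq]; nlinarith [sq_nonneg z.re]) (norm_nonneg _)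
  have hpos : 0 < ‖z + Complex.I‖ := by linarith
  rw [show -t = -2 + -(t - 2) by ring, Real.rpow_add hpos, Real.rpow_neg hpos.le, Real.rpow_two]
  exact mul_le_mul (inv_anti₀ (by positivity) hre)
    (Real.rpow_le_rpow_of_nonpos (by linarith) him (by linarith)) (by positivity) (by positivity)

lemma lintegral_norm_add_I_rpow_neg_lt_top {α t : ℝ} (hα : -1 < α) (ht : α + 3 < t) :
    ∫⁻ z, ENNReal.ofReal (‖z + Complex.I‖ ^ (-t)) ∂Vm α < ∞ := by
  have hA : Measurable fun x : ℝ => ENNReal.ofReal (1 + x ^ 2)⁻¹ := by fun_prop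
  have hB : Measurable fun y : ℝ => ENNReal.ofReal ((1 + y) ^ (-(t - 2))) := by fun_prop
  calc ∫⁻ z, ENNReal.ofReal (‖z + Complex.I‖ ^ (-t)) ∂Vm α
      ≤ ∫⁻ z, ENNReal.ofReal (1 + z.re ^ 2)⁻¹ * ENNReal.ofReal ((1 + z.im) ^ (-(t - 2))) ∂Vm α := by
        rw [← restrict_Vm_UHP]
        refine setLIntegral_mono' isOpen_UHP.measurableSet fun z hz => ?_
        rw [← ENNReal.ofReal_mul (by positivity)]
        exact ENNReal.ofReal_le_ofReal (norm_add_I_rpow_neg_le (by linarith) hz)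
    _ = (∫⁻ x : ℝ, ENNReal.ofReal (1 + x ^ 2)⁻¹) *
          ∫⁻ y in Ioi 0, ENNReal.ofReal (y ^ α * (1 + y) ^ (-(t - 2))) := by
        rw [lintegral_Vm_re_mul_im α hA hB]
        congr 1
        refine setLIntegral_congr_fun measurableSet_Ioi fun y (hy : 0 < y) => ?_
        rw [ENNReal.ofReal_mul (by positivity)]
    _ < ∞ := ENNReal.mul_lt_top integrable_inv_one_add_sq.lintegral_lt_top
        (lintegral_rpow_mul_one_add_rpow_neg_lt_top hα (by linarith))

/-- The test function adapted to the Carleson square over `(a, b)`, whose pole `a - (b - a) i` is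
the reflection of the upper left corner: bounded below on the square, and decaying fast enough away
from it to lie in a weighted Bergman space once `N` is large. -/
def carlesonTest (N : ℕ) (a b : ℝ) (z : ℂ) : ℂ :=
  ((b - a : ℝ) / (z - a + (b - a : ℝ) * Complex.I)) ^ N

lemma carlesonTest_denom_ne_zero {a b : ℝ} (h : a < b) {z : ℂ} (hz : z ∈ UHP) :
    z - a + (b - a : ℝ) * Complex.I ≠ 0 := fun h0 => by
  have him := congrArg Complex.im h0
  simp only [Complex.add_im, Complex.sub_im, Complex.ofReal_im, Complex.im_ofReal_mul,
    Complex.I_im, Complex.zero_im] at him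
  linarith [show 0 < z.im from hz]

lemma differentiableOn_carlesonTest (N : ℕ) {a b : ℝ} (h : a < b) :
    DifferentiableOn ℂ (carlesonTest N a b) UHP :=
  ((differentiableOn_const _).div (by fun_prop) fun _ => carlesonTest_denom_ne_zero h).pow N

lemma measurable_carlesonTest (N : ℕ) (a b : ℝ) : Measurable (carlesonTest N a b) := by
  unfold carlesonTest
  fun_prop

lemma inv_three_pow_le_enorm_carlesonTest (N : ℕ) {a b : ℝ} {z : ℂ} (hz : z ∈ carlSq a b) :
    3⁻¹ ^ N ≤ ‖carlesonTest N a b z‖ₑ := by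
  have hzU := carlSq_subset_UHP a b hz
  obtain ⟨⟨hre, hre'⟩, him, him'⟩ := hz
  have hab : a < b := hre.trans hre'
  have hdenom : ‖z - a + (b - a : ℝ) * Complex.I‖ ≤ 3 * (b - a) := by
    refine (Complex.norm_le_abs_re_add_abs_im _).trans ?_
    have hre_eq : (z - a + (b - a : ℝ) * Complex.I).re = z.re - a := by simp
    have him_eq : (z - a + (b - a : ℝ) * Complex.I).im = z.im + (b - a) := by simp
    rw [hre_eq, him_eq, abs_of_pos (by linarith), abs_of_pos (by linarith)]
    linarith
  have hquot : 3⁻¹ ≤ ‖((b - a : ℝ) / (z - a + (b - a : ℝ) * Complex.I) : ℂ)‖ := by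
    rw [norm_div, Complex.norm_real, Real.norm_of_nonneg (sub_nonneg.2 hab.le),
      le_div_iff₀ (norm_pos_iff.2 (carlesonTest_denom_ne_zero hab hzU))]
    linarith
  rw [carlesonTest, enorm_pow, ← ofReal_norm]
  gcongr
  rw [← ENNReal.ofReal_ofNat, ← ENNReal.ofReal_inv_of_pos three_pos]
  exact ENNReal.ofReal_le_ofReal hquot

lemma carlesonTest_mul_add (N : ℕ) {a b : ℝ} (h : a < b) (w : ℂ) :
    carlesonTest N a b ((b - a : ℝ) * w + a) = ((w + Complex.I)⁻¹) ^ N := by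
  have hL : ((b - a : ℝ) : ℂ) ≠ 0 := Complex.ofReal_ne_zero.2 (sub_pos.2 h).ne'
  rw [carlesonTest, add_sub_cancel_right, ← mul_add, div_mul_cancel_left₀ hL]

lemma lintegral_enorm_carlesonTest_rpow {p : ℝ} (hp : 0 ≤ p) (α : ℝ) (N : ℕ) {a b : ℝ}
    (h : a < b) :
    ∫⁻ z, ‖carlesonTest N a b z‖ₑ ^ p ∂Vm α = ENNReal.ofReal ((b - a) ^ (2 + α)) *
      ∫⁻ w, ENNReal.ofReal (‖w + Complex.I‖ ^ (-(N * p))) ∂Vm α := by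
  rw [lintegral_Vm_eq_lintegral_mul_add α ((measurable_carlesonTest N a b).enorm.pow_const p)
    (sub_pos.2 h) a]
  congr 2 with w
  rw [carlesonTest_mul_add N h, ← ofReal_norm, ENNReal.ofReal_rpow_of_nonneg (norm_nonneg _) hp,
    norm_pow, norm_inv, Real.rpow_neg (norm_nonneg _), Real.rpow_natCast_mul (norm_nonneg _),
    inv_pow, Real.inv_rpow (by positivity)]

lemma exists_lintegral_enorm_carlesonTest_rpow_le {α p : ℝ} (hα : -1 < α) (hp : 0 ≤ p) {N : ℕ}
    (hN : α + 3 < N * p) : ∃ M : ℝ≥0∞, M ≠ ∞ ∧ ∀ a b : ℝ, a < b →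
      ∫⁻ z, ‖carlesonTest N a b z‖ₑ ^ p ∂Vm α ≤ M * Vm α (carlSq a b) := by
  have hV := Vm_carlSq_ne_zero α zero_lt_one
  have hV' := (Vm_carlSq_lt_top hα zero_lt_one).ne
  refine ⟨(∫⁻ w, ENNReal.ofReal (‖w + Complex.I‖ ^ (-(N * p))) ∂Vm α) / Vm α (carlSq 0 1),
    ENNReal.div_ne_top (lintegral_norm_add_I_rpow_neg_lt_top hα hN).ne hV, fun a b h => ?_⟩
  have hscale := Vm_carlSq_mul_add α (sub_pos.2 h) a 0 1
  rw [mul_zero, zero_add, mul_one, sub_add_cancel] at hscale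
  rw [lintegral_enorm_carlesonTest_rpow hp α N h, hscale, mul_left_comm,
    ENNReal.div_mul_cancel hV hV']

lemma setLIntegral_le_of_forall_mul_measure_le {Z : Type*} [MeasurableSpace Z] {μ : Measure Z}
    {s : Set Z} (hs : MeasurableSet s) {g : Z → ℝ≥0∞} {C : ℝ≥0∞} (hC : C ≠ ∞)
    (h : ∀ z ∈ s, g z * μ s ≤ C) : ∫⁻ z in s, g z ∂μ ≤ C := by
  rcases eq_or_ne (μ s) 0 with hμs | hμs
  · rw [setLIntegral_measure_zero s g hμs]
    exact zero_le
  calc ∫⁻ z in s, g z ∂μ ≤ ∫⁻ _ in s, C / μ s ∂μ :=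
        setLIntegral_mono' hs fun z hz =>
          (ENNReal.le_div_iff_mul_le (.inl hμs) (.inr hC)).2 (h z hz)
    _ = C * ((μ s)⁻¹ * μ s) := by rw [setLIntegral_const, div_eq_mul_inv, mul_assoc]
    _ ≤ C := mul_le_of_le_one_right' (ENNReal.inv_mul_le_one _)

lemma rpow_eq_rpow_sub_one_mul (x : ℝ≥0∞) {r : ℝ} (hr : 1 ≤ r) : x ^ r = x ^ (r - 1) * x := by
  conv_lhs => rw [← sub_add_cancel r 1, ENNReal.rpow_add_of_nonneg _ _ (by linarith) zero_le_one,
    ENNReal.rpow_one]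

section Embedding

variable {Z W : Type*} [MeasurableSpace Z] [MeasurableSpace W] {μ : Measure Z} {ν : Measure W}
  {T : Set (Z × W)}

lemma lintegral_mul_setLIntegral_prodMk_preimage [SFinite μ] [SFinite ν] (hT : MeasurableSet T)
    {G : Z → ℝ≥0∞} (hG : Measurable G) {F : W → ℝ≥0∞} (hF : AEMeasurable F ν) :
    ∫⁻ z, G z * ∫⁻ w in Prod.mk z ⁻¹' T, F w ∂ν ∂μ =
      ∫⁻ w, F w * ∫⁻ z in (Prod.mk · w) ⁻¹' T, G z ∂μ ∂ν := by
  have hmeas : AEMeasurable (T.indicator fun x : Z × W => G x.1 * F x.2) (μ.prod ν) :=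
    ((hG.comp measurable_fst).aemeasurable.mul hF.comp_snd).indicator hT
  have hleft : ∀ z, G z * ∫⁻ w in Prod.mk z ⁻¹' T, F w ∂ν =
      ∫⁻ w, T.indicator (fun x : Z × W => G x.1 * F x.2) (z, w) ∂ν := fun z => by
    rw [← lintegral_const_mul'' _ hF.restrict,
      ← lintegral_indicator (hT.preimage measurable_prodMk_left)]
    rfl
  have hright : ∀ w, F w * ∫⁻ z in (Prod.mk · w) ⁻¹' T, G z ∂μ =
      ∫⁻ z, T.indicator (fun x : Z × W => G x.1 * F x.2) (z, w) ∂μ := fun w => by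
    rw [mul_comm, ← lintegral_mul_const _ hG,
      ← lintegral_indicator (hT.preimage measurable_prodMk_right)]
    rfl
  simp only [hleft, hright]
  exact lintegral_lintegral_swap hmeas

-- Bounding only `r - 1` of the `r` factors by the total mass `I` keeps the estimate linear in the
-- local mass `J`, so that Tonelli applies to `J`.
lemma rpow_le_of_mul_le {φ V K J I : ℝ≥0∞} {r : ℝ} (hr : 1 ≤ r) (hV : V ≠ 0) (hV' : V ≠ ∞)
    (hφ : φ * V ≤ K * J) (hJI : J ≤ I) : φ ^ r ≤ K ^ r * I ^ (r - 1) * V⁻¹ ^ r * J := by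
  have hφJ : φ ≤ K * J * V⁻¹ := by
    rw [← div_eq_mul_inv]
    exact (ENNReal.le_div_iff_mul_le (.inl hV) (.inl hV')).2 hφ
  have hφI : φ ≤ K * I * V⁻¹ := hφJ.trans (by gcongr)
  calc φ ^ r = φ ^ (r - 1) * φ := rpow_eq_rpow_sub_one_mul φ hr
    _ ≤ (K * I * V⁻¹) ^ (r - 1) * (K * J * V⁻¹) := by
        gcongr
    _ = K ^ r * I ^ (r - 1) * V⁻¹ ^ r * J := by
        rw [ENNReal.mul_rpow_of_nonneg _ _ (by linarith),
          ENNReal.mul_rpow_of_nonneg _ _ (by linarith), rpow_eq_rpow_sub_one_mul K hr,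
          rpow_eq_rpow_sub_one_mul V⁻¹ hr]
        ring

lemma inv_rpow_mul_le_of_le_mul_rpow {V m C : ℝ≥0∞} {r : ℝ} (h : m ≤ C * V ^ r) :
    V⁻¹ ^ r * m ≤ C := by
  calc V⁻¹ ^ r * m ≤ V⁻¹ ^ r * (C * V ^ r) := by gcongr
    _ = C * ((V ^ r)⁻¹ * V ^ r) := by rw [ENNReal.inv_rpow, mul_left_comm]
    _ ≤ C := mul_le_of_le_one_right' (ENNReal.inv_mul_le_one _)

theorem lintegral_rpow_le_of_sub_mean_value [SFinite μ] [SFinite ν] (hT : MeasurableSet T)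
    {r : ℝ} (hr : 1 ≤ r) {φ : Z → ℝ≥0∞} {F : W → ℝ≥0∞} (hF : AEMeasurable F ν) {K C : ℝ≥0∞}
    (hC : C ≠ ∞)
    (hT_pos : ∀ᵐ z ∂μ, ν (Prod.mk z ⁻¹' T) ≠ 0) (hT_fin : ∀ᵐ z ∂μ, ν (Prod.mk z ⁻¹' T) ≠ ∞)
    (hφ : ∀ᵐ z ∂μ, φ z * ν (Prod.mk z ⁻¹' T) ≤ K * ∫⁻ w in Prod.mk z ⁻¹' T, F w ∂ν)
    (hμ : ∀ z w, (z, w) ∈ T → μ ((Prod.mk · w) ⁻¹' T) ≤ C * ν (Prod.mk z ⁻¹' T) ^ r) :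
    ∫⁻ z, φ z ^ r ∂μ ≤ K ^ r * C * (∫⁻ w, F w ∂ν) ^ r := by
  have hG : Measurable fun z => (ν (Prod.mk z ⁻¹' T))⁻¹ ^ r :=
    (measurable_measure_prodMk_left hT).inv.pow_const r
  have hG_int : ∀ w, ∫⁻ z in (Prod.mk · w) ⁻¹' T, (ν (Prod.mk z ⁻¹' T))⁻¹ ^ r ∂μ ≤ C := fun w =>
    setLIntegral_le_of_forall_mul_measure_le (hT.preimage measurable_prodMk_right) hC
      fun z hz => inv_rpow_mul_le_of_le_mul_rpow (hμ z w hz)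
  calc ∫⁻ z, φ z ^ r ∂μ
      ≤ ∫⁻ z, K ^ r * (∫⁻ w, F w ∂ν) ^ (r - 1) * (ν (Prod.mk z ⁻¹' T))⁻¹ ^ r *
          ∫⁻ w in Prod.mk z ⁻¹' T, F w ∂ν ∂μ := by
        refine lintegral_mono_ae ?_
        filter_upwards [hT_pos, hT_fin, hφ] with z hz_pos hz_fin hφz
        exact rpow_le_of_mul_le hr hz_pos hz_fin hφz (setLIntegral_le_lintegral _ _)
    _ = ∫⁻ w, F w * ∫⁻ z in (Prod.mk · w) ⁻¹' T,
          K ^ r * (∫⁻ w, F w ∂ν) ^ (r - 1) * (ν (Prod.mk z ⁻¹' T))⁻¹ ^ r ∂μ ∂ν :=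
        lintegral_mul_setLIntegral_prodMk_preimage hT (hG.const_mul _) hF
    _ ≤ ∫⁻ w, F w * (K ^ r * (∫⁻ w, F w ∂ν) ^ (r - 1) * C) ∂ν := by
        gcongr with w
        rw [lintegral_const_mul _ hG]
        gcongr
        exact hG_int w
    _ = K ^ r * C * (∫⁻ w, F w ∂ν) ^ r := by
        rw [lintegral_mul_const'' _ hF, rpow_eq_rpow_sub_one_mul (∫⁻ w, F w ∂ν) hr]
        ring

end Embedding

/-- The Carleson square centred below `w` with side `4 * w.im`; it contains every point whose
Whitney disc contains `w`. -/
def carlesonTent (w : ℂ) : Set ℂ := carlSq (w.re - 2 * w.im) (w.re + 2 * w.im)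

lemma mem_carlesonTent_of_mem_whitneyDisc {z w : ℂ} (hw : w ∈ whitneyDisc z) :
    z ∈ carlesonTent w := by
  obtain ⟨hre, him⟩ := abs_re_sub_lt_and_abs_im_sub_lt hw
  rw [abs_lt] at hre him
  refine ⟨⟨?_, ?_⟩, ?_, ?_⟩ <;> linarith

lemma carlesonTent_subset_of_mem_whitneyDisc {z w : ℂ} (hw : w ∈ whitneyDisc z) :
    carlesonTent w ⊆ carlSq (z.im * (-4) + z.re) (z.im * 4 + z.re) := by
  obtain ⟨hre, him⟩ := abs_re_sub_lt_and_abs_im_sub_lt hw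
  rw [abs_lt] at hre him
  rintro x ⟨⟨hx, hx'⟩, hxi, hxi'⟩
  refine ⟨⟨?_, ?_⟩, hxi, ?_⟩ <;> linarith

lemma Vm_whitneyDisc_lt_top {α : ℝ} (hα : -1 < α) {z : ℂ} (hz : z ∈ UHP) :
    Vm α (whitneyDisc z) < ∞ := by
  replace hz : 0 < z.im := hz
  refine (measure_mono fun w hw => ?_).trans_lt
    (Vm_carlSq_lt_top hα (show z.re - 2 * z.im < z.re + 2 * z.im by linarith))
  obtain ⟨hre, him⟩ := abs_re_sub_lt_and_abs_im_sub_lt hw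
  rw [abs_lt] at hre him
  refine ⟨⟨?_, ?_⟩, ?_, ?_⟩ <;> linarith

lemma exists_Vm_carlesonTent_le {α : ℝ} (hα : -1 < α) : ∃ M : ℝ≥0∞, M ≠ ∞ ∧
    ∀ z w : ℂ, w ∈ whitneyDisc z → Vm α (carlesonTent w) ≤ M * Vm α (whitneyDisc z) := by
  have hI : Complex.I ∈ UHP := by simp [UHP]
  have hV := Vm_whitneyDisc_ne_zero α hI
  refine ⟨Vm α (carlSq (-4) 4) / Vm α (whitneyDisc Complex.I),
    ENNReal.div_ne_top (Vm_carlSq_lt_top hα (by norm_num)).ne hV, fun z w hw => ?_⟩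
  have hz : 0 < z.im := (mem_carlesonTent_of_mem_whitneyDisc hw).2.1
  calc Vm α (carlesonTent w)
      ≤ Vm α (carlSq (z.im * (-4) + z.re) (z.im * 4 + z.re)) :=
        measure_mono (carlesonTent_subset_of_mem_whitneyDisc hw)
    _ = ENNReal.ofReal (z.im ^ (2 + α)) * Vm α (carlSq (-4) 4) := Vm_carlSq_mul_add α hz _ _ _
    _ = _ := by
        rw [Vm_whitneyDisc α hz, mul_left_comm,
          ENNReal.div_mul_cancel hV (Vm_whitneyDisc_lt_top hα hI).ne]

lemma sigmaFinite_restrict_of_subset_iUnion {X : Type*} [MeasurableSpace X] {μ : Measure X}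
    {S : Set X} (hS : MeasurableSet S) {s : ℕ → Set X} (hcov : S ⊆ ⋃ n, s n)
    (hs : ∀ n, μ (s n) < ∞) : SigmaFinite (μ.restrict S) := by
  refine ⟨⟨⟨fun n => s n ∪ Sᶜ, fun _ => trivial, fun n => ?_, ?_⟩⟩⟩
  · rw [Measure.restrict_apply' hS, union_inter_distrib_right, compl_inter_self, union_empty]
    exact (measure_mono inter_subset_left).trans_lt (hs n)
  · rw [← iUnion_union]
    exact univ_subset_iff.1
      ((union_compl_self S).symm.subset.trans (union_subset_union_left _ hcov))

lemma UHP_prod_UHP_subset_iUnion_carlSq :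
    UHP ×ˢ UHP ⊆ ⋃ n : ℕ, carlSq (-(n + 1)) (n + 1) ×ˢ carlSq (-(n + 1)) (n + 1) := by
  rintro ⟨z, w⟩ ⟨hz, hw⟩
  replace hz : 0 < z.im := hz
  replace hw : 0 < w.im := hw
  obtain ⟨n, hn⟩ := exists_nat_gt (max (max |z.re| z.im) (max |w.re| w.im))
  simp only [max_lt_iff, abs_lt] at hn
  obtain ⟨⟨⟨_, _⟩, _⟩, ⟨_, _⟩, _⟩ := hn
  refine mem_iUnion.2 ⟨n, ⟨⟨?_, ?_⟩, hz, ?_⟩, ⟨?_, ?_⟩, hw, ?_⟩ <;> dsimp only <;> linarith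

/-- `μ` is an `(r, (α₁, α₂))`-Carleson measure on the product of two half-planes, with constant
`C`. -/
def IsCarlesonWith (α₁ α₂ r : ℝ) (C : ℝ≥0∞) (μ : Measure (ℂ × ℂ)) : Prop :=
  ∀ a₁ b₁ a₂ b₂ : ℝ, a₁ < b₁ → a₂ < b₂ →
    μ (carlSq a₁ b₁ ×ˢ carlSq a₂ b₂) ≤ C * (Vm α₁ (carlSq a₁ b₁) * Vm α₂ (carlSq a₂ b₂)) ^ r

/-- The weighted Bergman space `A^p` embeds into `L^q(μ)` over the product of two half-planes, the
inequality between the `q`-th powers of the norms holding with constant `C`. -/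
def IsBergmanEmbeddingWith (α₁ α₂ p q : ℝ) (C : ℝ≥0∞) (μ : Measure (ℂ × ℂ)) : Prop :=
  ∀ f : ℂ × ℂ → ℂ, DifferentiableOn ℂ f (UHP ×ˢ UHP) →
    ∫⁻ z in UHP ×ˢ UHP, ‖f z‖ₑ ^ q ∂μ ≤
      C * (∫⁻ z, ‖f z‖ₑ ^ p ∂(Vm α₁).prod (Vm α₂)) ^ (q / p)

section Carleson

variable {α₁ α₂ p q r : ℝ} {C : ℝ≥0∞} {μ : Measure (ℂ × ℂ)}

lemma IsCarlesonWith.sigmaFinite_restrict (hμ : IsCarlesonWith α₁ α₂ r C μ) (hα₁ : -1 < α₁)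
    (hα₂ : -1 < α₂) (hr : 0 ≤ r) (hC : C ≠ ∞) : SigmaFinite (μ.restrict (UHP ×ˢ UHP)) := by
  refine sigmaFinite_restrict_of_subset_iUnion
    (isOpen_UHP.prod isOpen_UHP).measurableSet UHP_prod_UHP_subset_iUnion_carlSq fun n => ?_
  have hn : -((n : ℝ) + 1) < n + 1 := neg_lt_self (by positivity)
  refine (hμ _ _ _ _ hn hn).trans_lt (ENNReal.mul_lt_top hC.lt_top ?_)
  exact ENNReal.rpow_lt_top_of_nonneg hr
    (ENNReal.mul_lt_top (Vm_carlSq_lt_top hα₁ hn) (Vm_carlSq_lt_top hα₂ hn)).ne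

lemma IsCarlesonWith.exists_measure_setOf_mem_whitneyBidisc_le
    (hμ : IsCarlesonWith α₁ α₂ r C μ) (hα₁ : -1 < α₁) (hα₂ : -1 < α₂) (hr : 0 ≤ r) (hC : C ≠ ∞) :
    ∃ M : ℝ≥0∞, M ≠ ∞ ∧ ∀ z w : ℂ × ℂ, w ∈ whitneyBidisc z →
      μ {z' | w ∈ whitneyBidisc z'} ≤ M * ((Vm α₁).prod (Vm α₂) (whitneyBidisc z)) ^ r := by
  obtain ⟨M₁, hM₁, hV₁⟩ := exists_Vm_carlesonTent_le hα₁
  obtain ⟨M₂, hM₂, hV₂⟩ := exists_Vm_carlesonTent_le hα₂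
  refine ⟨C * (M₁ * M₂) ^ r, ENNReal.mul_ne_top hC
    (ENNReal.rpow_ne_top_of_nonneg hr (ENNReal.mul_ne_top hM₁ hM₂)), fun z w hw => ?_⟩
  have hside : ∀ {z w : ℂ}, w ∈ whitneyDisc z → w.re - 2 * w.im < w.re + 2 * w.im :=
    fun {_ w} hw => by
      have him : 0 < w.im := whitneyDisc_subset_UHP _ hw
      linarith
  have hsub : {z' | w ∈ whitneyBidisc z'} ⊆ carlesonTent w.1 ×ˢ carlesonTent w.2 := fun z' hz' =>
    ⟨mem_carlesonTent_of_mem_whitneyDisc hz'.1, mem_carlesonTent_of_mem_whitneyDisc hz'.2⟩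
  calc μ {z' | w ∈ whitneyBidisc z'}
      ≤ μ (carlesonTent w.1 ×ˢ carlesonTent w.2) := measure_mono hsub
    _ ≤ C * (Vm α₁ (carlesonTent w.1) * Vm α₂ (carlesonTent w.2)) ^ r :=
        hμ _ _ _ _ (hside hw.1) (hside hw.2)
    _ ≤ C * (M₁ * Vm α₁ (whitneyDisc z.1) * (M₂ * Vm α₂ (whitneyDisc z.2))) ^ r := by
        gcongr
        · exact hV₁ _ _ hw.1
        · exact hV₂ _ _ hw.2
    _ = C * (M₁ * M₂) ^ r * ((Vm α₁).prod (Vm α₂) (whitneyBidisc z)) ^ r := by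
        rw [whitneyBidisc, Measure.prod_prod, mul_mul_mul_comm, ENNReal.mul_rpow_of_nonneg _ _ hr,
          mul_assoc]

lemma measurableSet_setOf_mem_whitneyBidisc :
    MeasurableSet {x : (ℂ × ℂ) × (ℂ × ℂ) | x.2 ∈ whitneyBidisc x.1} := by
  have hfst : IsOpen {x : (ℂ × ℂ) × (ℂ × ℂ) | dist x.2.1 x.1.1 < x.1.1.im / 2} :=
    isOpen_lt (by fun_prop) ((Complex.continuous_im.comp (by fun_prop)).div_const 2)
  have hsnd : IsOpen {x : (ℂ × ℂ) × (ℂ × ℂ) | dist x.2.2 x.1.2 < x.1.2.im / 2} :=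
    isOpen_lt (by fun_prop) ((Complex.continuous_im.comp (by fun_prop)).div_const 2)
  exact (hfst.inter hsnd).measurableSet

lemma aemeasurable_enorm_rpow_prod_Vm {f : ℂ × ℂ → ℂ} (hf : ContinuousOn f (UHP ×ˢ UHP)) :
    AEMeasurable (fun w => ‖f w‖ₑ ^ p) ((Vm α₁).prod (Vm α₂)) := by
  rw [← restrict_Vm_UHP α₁, ← restrict_Vm_UHP α₂, Measure.prod_restrict]
  exact (hf.aemeasurable (isOpen_UHP.prod isOpen_UHP).measurableSet).enorm.pow_const p

theorem IsCarlesonWith.exists_isBergmanEmbeddingWith (hμ : IsCarlesonWith α₁ α₂ (q / p) C μ)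
    (hα₁ : -1 < α₁) (hα₂ : -1 < α₂) (hp : 0 < p) (hpq : p ≤ q) (hC : C ≠ ∞) :
    ∃ M : ℝ≥0∞, M ≠ ∞ ∧ IsBergmanEmbeddingWith α₁ α₂ p q M μ := by
  have hr : 1 ≤ q / p := (one_le_div hp).2 hpq
  have hr0 : 0 ≤ q / p := zero_le_one.trans hr
  have := hμ.sigmaFinite_restrict hα₁ hα₂ hr0 hC
  obtain ⟨M, hM, hfibre⟩ := hμ.exists_measure_setOf_mem_whitneyBidisc_le hα₁ hα₂ hr0 hC
  refine ⟨(ENNReal.ofReal (2 ^ |α₁|) ^ 2 * ENNReal.ofReal (2 ^ |α₂|) ^ 2) ^ (q / p) * M,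
    by finiteness, fun f hf => ?_⟩
  have hU : MeasurableSet (UHP ×ˢ UHP) := (isOpen_UHP.prod isOpen_UHP).measurableSet
  have hpow : ∀ z, ‖f z‖ₑ ^ q = (‖f z‖ₑ ^ p) ^ (q / p) := fun z => by
    rw [← ENNReal.rpow_mul, mul_div_cancel₀ q hp.ne']
  rw [lintegral_congr hpow]
  refine lintegral_rpow_le_of_sub_mean_value measurableSet_setOf_mem_whitneyBidisc hr
    (aemeasurable_enorm_rpow_prod_Vm hf.continuousOn) hM ?_ ?_ ?_
    fun z w hw => (Measure.restrict_apply_le _ _).trans (hfibre z w hw)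
  · refine ae_restrict_of_forall_mem hU fun z hz => ?_
    change (Vm α₁).prod (Vm α₂) (whitneyDisc z.1 ×ˢ whitneyDisc z.2) ≠ 0
    rw [Measure.prod_prod]
    exact mul_ne_zero (Vm_whitneyDisc_ne_zero α₁ hz.1) (Vm_whitneyDisc_ne_zero α₂ hz.2)
  · refine ae_restrict_of_forall_mem hU fun z hz => ?_
    change (Vm α₁).prod (Vm α₂) (whitneyDisc z.1 ×ˢ whitneyDisc z.2) ≠ ∞
    rw [Measure.prod_prod]
    exact ENNReal.mul_ne_top (Vm_whitneyDisc_lt_top hα₁ hz.1).ne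
      (Vm_whitneyDisc_lt_top hα₂ hz.2).ne
  · exact ae_restrict_of_forall_mem hU fun z hz =>
      enorm_rpow_mul_prod_whitneyBidisc_le α₁ α₂ hp hf hz

lemma IsBergmanEmbeddingWith.measure_carlSq_prod_le (hμ : IsBergmanEmbeddingWith α₁ α₂ p q C μ)
    (hp : 0 ≤ p) (hq : 0 ≤ q) (N : ℕ) {a₁ b₁ a₂ b₂ : ℝ} (h₁ : a₁ < b₁) (h₂ : a₂ < b₂) :
    (3⁻¹ ^ N * 3⁻¹ ^ N) ^ q * μ (carlSq a₁ b₁ ×ˢ carlSq a₂ b₂) ≤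
      C * ((∫⁻ z, ‖carlesonTest N a₁ b₁ z‖ₑ ^ p ∂Vm α₁) *
        ∫⁻ z, ‖carlesonTest N a₂ b₂ z‖ₑ ^ p ∂Vm α₂) ^ (q / p) := by
  have hf : DifferentiableOn ℂ
      (fun z : ℂ × ℂ => carlesonTest N a₁ b₁ z.1 * carlesonTest N a₂ b₂ z.2) (UHP ×ˢ UHP) :=
    ((differentiableOn_carlesonTest N h₁).comp differentiableOn_fst fun _ hz => hz.1).mul
      ((differentiableOn_carlesonTest N h₂).comp differentiableOn_snd fun _ hz => hz.2)
  calc (3⁻¹ ^ N * 3⁻¹ ^ N) ^ q * μ (carlSq a₁ b₁ ×ˢ carlSq a₂ b₂)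
      = ∫⁻ _ in carlSq a₁ b₁ ×ˢ carlSq a₂ b₂, (3⁻¹ ^ N * 3⁻¹ ^ N) ^ q ∂μ := by
        rw [setLIntegral_const]
    _ ≤ ∫⁻ z in carlSq a₁ b₁ ×ˢ carlSq a₂ b₂,
          ‖carlesonTest N a₁ b₁ z.1 * carlesonTest N a₂ b₂ z.2‖ₑ ^ q ∂μ := by
        refine setLIntegral_mono' ((isOpen_carlSq _ _).prod (isOpen_carlSq _ _)).measurableSet
          fun z hz => ?_
        rw [enorm_mul]
        gcongr
        · exact inv_three_pow_le_enorm_carlesonTest N hz.1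
        · exact inv_three_pow_le_enorm_carlesonTest N hz.2
    _ ≤ ∫⁻ z in UHP ×ˢ UHP,
          ‖carlesonTest N a₁ b₁ z.1 * carlesonTest N a₂ b₂ z.2‖ₑ ^ q ∂μ :=
        lintegral_mono_set (prod_mono (carlSq_subset_UHP _ _) (carlSq_subset_UHP _ _))
    _ ≤ C * (∫⁻ z, ‖carlesonTest N a₁ b₁ z.1 * carlesonTest N a₂ b₂ z.2‖ₑ ^ p
          ∂(Vm α₁).prod (Vm α₂)) ^ (q / p) := hμ _ hf
    _ = _ := by
        simp only [enorm_mul, ENNReal.mul_rpow_of_nonneg _ _ hp]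
        rw [lintegral_prod_mul ((measurable_carlesonTest N a₁ b₁).enorm.pow_const p).aemeasurable
          ((measurable_carlesonTest N a₂ b₂).enorm.pow_const p).aemeasurable]

theorem IsBergmanEmbeddingWith.exists_isCarlesonWith (hμ : IsBergmanEmbeddingWith α₁ α₂ p q C μ)
    (hα₁ : -1 < α₁) (hα₂ : -1 < α₂) (hp : 0 < p) (hq : 0 ≤ q) (hC : C ≠ ∞) :
    ∃ M : ℝ≥0∞, M ≠ ∞ ∧ IsCarlesonWith α₁ α₂ (q / p) M μ := by
  have hr : 0 ≤ q / p := by positivity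
  obtain ⟨N, hN⟩ := exists_nat_gt ((max α₁ α₂ + 3) / p)
  rw [div_lt_iff₀ hp] at hN
  obtain ⟨M₁, hM₁, hJ₁⟩ := exists_lintegral_enorm_carlesonTest_rpow_le hα₁ hp.le
    (lt_of_le_of_lt (by gcongr; exact le_max_left _ _) hN)
  obtain ⟨M₂, hM₂, hJ₂⟩ := exists_lintegral_enorm_carlesonTest_rpow_le hα₂ hp.le
    (lt_of_le_of_lt (by gcongr; exact le_max_right _ _) hN)
  set c : ℝ≥0∞ := (3⁻¹ ^ N * 3⁻¹ ^ N) ^ q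
  have hc : c ≠ 0 := (ENNReal.rpow_pos (by simp [pos_iff_ne_zero]) (by finiteness)).ne'
  have hc' : c ≠ ∞ := by finiteness
  refine ⟨C * (M₁ * M₂) ^ (q / p) / c, by finiteness, fun a₁ b₁ a₂ b₂ h₁ h₂ => ?_⟩
  rw [← ENNReal.mul_div_right_comm, ENNReal.le_div_iff_mul_le (.inl hc) (.inl hc'), mul_comm]
  calc c * μ (carlSq a₁ b₁ ×ˢ carlSq a₂ b₂)
      ≤ C * ((∫⁻ z, ‖carlesonTest N a₁ b₁ z‖ₑ ^ p ∂Vm α₁) *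
          ∫⁻ z, ‖carlesonTest N a₂ b₂ z‖ₑ ^ p ∂Vm α₂) ^ (q / p) :=
        hμ.measure_carlSq_prod_le hp.le hq N h₁ h₂
    _ ≤ C * (M₁ * Vm α₁ (carlSq a₁ b₁) * (M₂ * Vm α₂ (carlSq a₂ b₂))) ^ (q / p) := by
        gcongr
        · exact hJ₁ a₁ b₁ h₁
        · exact hJ₂ a₂ b₂ h₂
    _ = C * (M₁ * M₂) ^ (q / p) * (Vm α₁ (carlSq a₁ b₁) * Vm α₂ (carlSq a₂ b₂)) ^ (q / p) := by
        rw [mul_mul_mul_comm, ENNReal.mul_rpow_of_nonneg _ _ hr, mul_assoc]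

end Carleson

lemma exists_pos_le_ofReal {M : ℝ≥0∞} (hM : M ≠ ∞) : ∃ C : ℝ, 0 < C ∧ M ≤ ENNReal.ofReal C :=
  ⟨M.toReal + 1, by positivity,
    (ENNReal.le_ofReal_iff_toReal_le hM (by positivity)).2 (by linarith)⟩

theorem carleson_measure_iff_embedding_prod_general
    (α₁ α₂ : ℝ) (hα₁ : -1 < α₁) (hα₂ : -1 < α₂)
    (p q : ℝ) (hp : 0 < p) (hpq : p ≤ q)
    (μ : Measure (ℂ × ℂ)) :
    (∃ C : ℝ, 0 < C ∧ ∀ a₁ b₁ a₂ b₂ : ℝ, a₁ < b₁ → a₂ < b₂ →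
        μ (carlSq a₁ b₁ ×ˢ carlSq a₂ b₂) ≤
          ENNReal.ofReal C *
            (Vm α₁ (carlSq a₁ b₁) * Vm α₂ (carlSq a₂ b₂)) ^ (q / p))
    ↔ (∃ C : ℝ, 0 < C ∧ ∀ f : ℂ × ℂ → ℂ, DifferentiableOn ℂ f (UHP ×ˢ UHP) →
        (∫⁻ z in UHP ×ˢ UHP, (‖f z‖₊ : ℝ≥0∞) ^ q ∂μ) ≤
          ENNReal.ofReal C *
            (∫⁻ z, (‖f z‖₊ : ℝ≥0∞) ^ p ∂((Vm α₁).prod (Vm α₂))) ^ (q / p)) := by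
  constructor
  · rintro ⟨C, -, hμ⟩
    obtain ⟨M, hM, hembed⟩ := IsCarlesonWith.exists_isBergmanEmbeddingWith hμ hα₁ hα₂ hp hpq
      ENNReal.ofReal_ne_top
    obtain ⟨C', hC', hMC'⟩ := exists_pos_le_ofReal hM
    exact ⟨C', hC', fun f hf => (hembed f hf).trans (mul_le_mul' hMC' le_rfl)⟩
  · rintro ⟨C, -, hμ⟩
    obtain ⟨M, hM, hcarl⟩ := IsBergmanEmbeddingWith.exists_isCarlesonWith hμ hα₁ hα₂ hp
      (hp.le.trans hpq) ENNReal.ofReal_ne_top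
    obtain ⟨C', hC', hMC'⟩ := exists_pos_le_ofReal hM
    exact ⟨C', hC', fun a₁ b₁ a₂ b₂ h₁ h₂ => (hcarl a₁ b₁ a₂ b₂ h₁ h₂).trans
      (mul_le_mul' hMC' le_rfl)⟩

/-- for `α₁,α₂ > −1`, `1 < p ≤ q < ∞` and a positive measure `μ` on
`Π⁺×Π⁺`, `μ` is a `(q/p, α⃗)`-Carleson measure (i.e. `μ(Q_{I₁}×Q_{I₂}) ≤
C (V_{α₁}(Q_{I₁}) V_{α₂}(Q_{I₂}))^{q/p}` for all intervals) iff the Carleson embedding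
`∫ |f|^q dμ ≤ C (∫ |f|^p dV_{α⃗})^{q/p}` holds for all holomorphic `f` on `Π⁺×Π⁺`. -/
theorem carleson_measure_iff_embedding_prod
    (α₁ α₂ : ℝ) (hα₁ : -1 < α₁) (hα₂ : -1 < α₂)
    (p q : ℝ) (hp : 1 < p) (hpq : p ≤ q)
    (μ : Measure (ℂ × ℂ)) :
    (∃ C : ℝ, 0 < C ∧ ∀ a₁ b₁ a₂ b₂ : ℝ, a₁ < b₁ → a₂ < b₂ →
        μ (carlSq a₁ b₁ ×ˢ carlSq a₂ b₂) ≤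
          ENNReal.ofReal C *
            (Vm α₁ (carlSq a₁ b₁) * Vm α₂ (carlSq a₂ b₂)) ^ (q / p))
    ↔ (∃ C : ℝ, 0 < C ∧ ∀ f : ℂ × ℂ → ℂ, DifferentiableOn ℂ f (UHP ×ˢ UHP) →
        (∫⁻ z in UHP ×ˢ UHP, (‖f z‖₊ : ℝ≥0∞) ^ q ∂μ) ≤
          ENNReal.ofReal C *
            (∫⁻ z, (‖f z‖₊ : ℝ≥0∞) ^ p ∂((Vm α₁).prod (Vm α₂))) ^ (q / p)) :=
  carleson_measure_iff_embedding_prod_general α₁ α₂ hα₁ hα₂ p q (zero_lt_one.trans hp) hpq μ
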